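/- Let H be an induced subgraph of a graph G with mr(F₂,H) = k, and suppose G ∈ F_{k+1}(F₂,H). If |V(G)| − |V(H)| ≥ 2, then for every vertex v of G−H there exists M ∈ MR(F₂,H) with respect to which v is rank-preserving. If |V(G)| − |V(H)| ≥ 3, then for every pair of distinct vertices u,v of G−H there exists M ∈ MR(F₂,H) with respect to which the edge uv is rank-preserving. -/

import Mathlib

/-!
Delete a vertex `z` outside `W` and let `A` be a matrix of minimum rank for `G - z`. If
`mr(G - z) ≤ mr(H)` for `H = G[W]`, then the principal submatrix `M` of `A` on `W` satisfies
`mr(H) ≤ rank M ≤ rank A ≤ mr(H)`, so `M ∈ MR(H)` and every submatrix of `A` containing `M` has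
the rank of `M`. Over `F₂` a nonzero entry is `1`, so the entries of `A` off the diagonal are the
weights, and `[M | wt(v)]` and the bordered matrix of an edge `uv` are such submatrices as soon as
`u` and `v` differ from `z`. The cardinality hypotheses provide a `z` different from the given
vertices.
-/

open Matrix

/-- `A` is a symmetric matrix over `F` whose off-diagonal nonzero pattern is
given by the graph `G` (diagonal entries are unconstrained). -/
def IsGraphMatrix (F : Type*) [Field F] {V : Type*} (G : SimpleGraph V)
    (A : Matrix V V F) : Prop :=
  A.IsSymm ∧ ∀ i j : V, i ≠ j → (A i j ≠ 0 ↔ G.Adj i j)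

/-- The minimum rank `mr(F, G)` of the graph `G` over the field `F`. -/
noncomputable def minRank (F : Type*) [Field F] {V : Type*} [Fintype V]
    (G : SimpleGraph V) : ℕ :=
  sInf {r : ℕ | ∃ A : Matrix V V F, IsGraphMatrix F G A ∧ A.rank = r}

/-- The graph `G - v` obtained from `G` by deleting the vertex `v`. -/
def deleteVert {V : Type*} (G : SimpleGraph V) (v : V) : SimpleGraph {u : V // u ≠ v} :=
  SimpleGraph.comap Subtype.val G

/-- The induced subgraph of `G` on a finite set `W` of vertices. -/
def inducedSub {V : Type*} (G : SimpleGraph V) (W : Finset V) :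
    SimpleGraph {x : V // x ∈ W} :=
  SimpleGraph.comap Subtype.val G

/-- `MR(F, G)`: the set of matrices in `S(F, G)` attaining the minimum rank of `G`. -/
noncomputable def MRSet (F : Type*) [Field F] {V : Type*} [Fintype V] (G : SimpleGraph V) :
    Set (Matrix V V F) :=
  {A | IsGraphMatrix F G A ∧ A.rank = minRank F G}

/-- The weight vector of a vertex `v` with respect to the induced subgraph on `W`:
its entry at `i ∈ W` is `1` iff `v` is adjacent to `i` in `G`. -/
def wtVec {V : Type*} (G : SimpleGraph V) [DecidableRel G.Adj] (W : Finset V) (v : V) :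
    {x : V // x ∈ W} → ZMod 2 :=
  fun i => if G.Adj v ↑i then 1 else 0

/-- The matrix `[M | w]`: `M` augmented by the extra column `w`. -/
def augmentCol {F : Type*} {n : Type*} (M : Matrix n n F) (w : n → F) :
    Matrix n (n ⊕ Unit) F :=
  Matrix.of fun i => Sum.elim (fun j => M i j) (fun _ => w i)

/-- The bordered matrix `[[M, u], [vᵀ, c]]`. -/
def borderMat {F : Type*} {n : Type*} (M : Matrix n n F) (u v : n → F) (c : F) :
    Matrix (n ⊕ Unit) (n ⊕ Unit) F :=
  Matrix.of (Sum.elim (fun i => Sum.elim (fun j => M i j) (fun _ => u i))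
                      (fun _ => Sum.elim (fun j => v j) (fun _ => c)))

section Rank

variable {R : Type*} [CommSemiring R] [StrongRankCondition R]
  {l m n : Type*} [Fintype l] [Fintype n]

lemma rank_augmentCol_submatrix (A : Matrix m n R) (r : l → m) (c : l → n) (q : n)
    (h : A.rank ≤ (A.submatrix r c).rank) :
    (augmentCol (A.submatrix r c) fun i => A (r i) q).rank = (A.submatrix r c).rank := by
  have heq : (augmentCol (A.submatrix r c) fun i => A (r i) q) =
      A.submatrix r (Sum.elim c fun _ => q) := by
    ext i (j | _) <;> rfl
  rw [heq]
  exact le_antisymm ((A.rank_submatrix_le _ _).trans h)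
    ((A.submatrix r (Sum.elim c fun _ => q)).rank_submatrix_le id Sum.inl)

lemma rank_borderMat_submatrix (A : Matrix m n R) (r : l → m) (c : l → n) (p : m) (q : n)
    (h : A.rank ≤ (A.submatrix r c).rank) :
    (borderMat (A.submatrix r c) (fun i => A (r i) q) (fun j => A p (c j)) (A p q)).rank =
      (A.submatrix r c).rank := by
  have heq : borderMat (A.submatrix r c) (fun i => A (r i) q) (fun j => A p (c j)) (A p q) =
      A.submatrix (Sum.elim r fun _ => p) (Sum.elim c fun _ => q) := by
    ext (i | _) (j | _) <;> rfl
  rw [heq]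
  exact le_antisymm ((A.rank_submatrix_le _ _).trans h)
    ((A.submatrix (Sum.elim r fun _ => p) (Sum.elim c fun _ => q)).rank_submatrix_le
      Sum.inl Sum.inl)

end Rank

section GraphMatrix

variable {F : Type*} [Field F] {U V : Type*} {G : SimpleGraph V} {A : Matrix V V F} {f : U → V}

lemma isGraphMatrix_adjMatrix (F : Type*) [Field F] (G : SimpleGraph V) [DecidableRel G.Adj] :
    IsGraphMatrix F G (G.adjMatrix F) :=
  ⟨G.isSymm_adjMatrix, fun i j _ => by simp [SimpleGraph.adjMatrix_apply]⟩

lemma IsGraphMatrix.submatrix (hA : IsGraphMatrix F G A) (hf : Function.Injective f) :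
    IsGraphMatrix F (G.comap f) (A.submatrix f f) :=
  ⟨hA.1.submatrix f, fun _ _ hij => hA.2 _ _ (hf.ne hij)⟩

lemma IsGraphMatrix.apply_eq_ite {B : Matrix V V (ZMod 2)} (hB : IsGraphMatrix (ZMod 2) G B)
    {i j : V} [Decidable (G.Adj i j)] (hij : i ≠ j) : B i j = if G.Adj i j then 1 else 0 := by
  split_ifs with hadj
  · exact Fin.eq_one_of_ne_zero _ ((hB.2 i j hij).2 hadj)
  · exact not_not.1 fun h => hadj ((hB.2 i j hij).1 h)

variable [Fintype U] [Fintype V]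

lemma MRSet_nonempty (F : Type*) [Field F] (G : SimpleGraph V) : (MRSet F G).Nonempty := by
  classical
  exact Nat.sInf_mem (s := {r : ℕ | ∃ A : Matrix V V F, IsGraphMatrix F G A ∧ A.rank = r})
    ⟨_, G.adjMatrix F, isGraphMatrix_adjMatrix F G, rfl⟩

lemma IsGraphMatrix.minRank_le_rank (hA : IsGraphMatrix F G A) : minRank F G ≤ A.rank :=
  Nat.sInf_le ⟨A, hA, rfl⟩

lemma submatrix_mem_MRSet (hA : A ∈ MRSet F G) (hf : Function.Injective f)
    (h : minRank F G ≤ minRank F (G.comap f)) : A.submatrix f f ∈ MRSet F (G.comap f) := by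
  have hM : IsGraphMatrix F (G.comap f) (A.submatrix f f) := hA.1.submatrix hf
  refine ⟨hM, le_antisymm ?_ hM.minRank_le_rank⟩
  calc (A.submatrix f f).rank ≤ A.rank := A.rank_submatrix_le f f
    _ = minRank F G := hA.2
    _ ≤ minRank F (G.comap f) := h

end GraphMatrix

section DeleteVert

variable {V : Type*} {G : SimpleGraph V} {W : Finset V} {z : V}

/-- The inclusion of the vertices of `G[W]` into those of `G - z`, for `z ∉ W`. -/
def inclDelete (hz : z ∉ W) : {x : V // x ∈ W} ↪ {u : V // u ≠ z} :=
  Subtype.impEmbedding _ _ fun _ hx => ne_of_mem_of_not_mem hx hz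

instance [DecidableRel G.Adj] : DecidableRel (deleteVert G z).Adj :=
  inferInstanceAs (DecidableRel (G.comap Subtype.val).Adj)

lemma IsGraphMatrix.row_eq_wtVec [DecidableRel G.Adj]
    {A : Matrix {u : V // u ≠ z} {u : V // u ≠ z} (ZMod 2)}
    (hA : IsGraphMatrix (ZMod 2) (deleteVert G z) A) (hz : z ∉ W) {v : {u : V // u ≠ z}}
    (hv : v.1 ∉ W) : (fun i => A v (inclDelete hz i)) = wtVec G W v := by
  funext i
  have hvi : v ≠ inclDelete hz i := fun h => hv (h ▸ i.2)
  exact hA.apply_eq_ite hvi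

lemma IsGraphMatrix.col_eq_wtVec [DecidableRel G.Adj]
    {A : Matrix {u : V // u ≠ z} {u : V // u ≠ z} (ZMod 2)}
    (hA : IsGraphMatrix (ZMod 2) (deleteVert G z) A) (hz : z ∉ W) {v : {u : V // u ≠ z}}
    (hv : v.1 ∉ W) : (fun i => A (inclDelete hz i) v) = wtVec G W v := by
  simpa only [hA.1.apply] using hA.row_eq_wtVec hz hv

lemma exists_mem_MRSet_forall_rank_preserving [Fintype V] [DecidableEq V] [DecidableRel G.Adj]
    (hz : z ∉ W) (h : minRank (ZMod 2) (deleteVert G z) ≤ minRank (ZMod 2) (inducedSub G W)) :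
    ∃ M ∈ MRSet (ZMod 2) (inducedSub G W),
      (∀ v : V, v ∉ W → v ≠ z → (augmentCol M (wtVec G W v)).rank = M.rank) ∧
      ∀ u v : V, u ∉ W → v ∉ W → u ≠ z → v ≠ z → u ≠ v →
        (borderMat M (wtVec G W u) (wtVec G W v) (if G.Adj u v then 1 else 0)).rank = M.rank := by
  obtain ⟨A, hA⟩ := MRSet_nonempty (ZMod 2) (deleteVert G z)
  let ι := inclDelete hz
  have hM : A.submatrix ι ι ∈ MRSet (ZMod 2) (inducedSub G W) :=
    submatrix_mem_MRSet hA ι.injective h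
  have hrank : A.rank ≤ (A.submatrix ι ι).rank := by
    rw [hA.2, hM.2]
    exact h
  refine ⟨A.submatrix ι ι, hM, fun v hv hvz => ?_, fun u v hu hv huz hvz huv => ?_⟩
  · rw [← hA.1.col_eq_wtVec hz (v := ⟨v, hvz⟩) hv]
    exact rank_augmentCol_submatrix A ι ι _ hrank
  -- `wt(u)` is the extra column and `wt(v)` the extra row, so the corner is the entry at `(v, u)`.
  · have hcorner : A ⟨v, hvz⟩ ⟨u, huz⟩ = if G.Adj u v then 1 else 0 := by
      rw [hA.1.1.apply]
      exact hA.1.apply_eq_ite (Subtype.coe_ne_coe.1 huv)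
    rw [← hcorner, ← hA.1.col_eq_wtVec hz (v := ⟨u, huz⟩) hu,
      ← hA.1.row_eq_wtVec hz (v := ⟨v, hvz⟩) hv]
    exact rank_borderMat_submatrix A ι ι _ _ hrank

end DeleteVert

theorem exists_rank_preserving_general {V : Type*} [Fintype V] [DecidableEq V]
    (G : SimpleGraph V) [DecidableRel G.Adj] (W : Finset V)
    (hdel : ∀ v : V, v ∉ W →
      minRank (ZMod 2) (deleteVert G v) ≤ minRank (ZMod 2) (inducedSub G W)) :
    (2 ≤ Wᶜ.card → ∀ v : V, v ∉ W →
      ∃ M ∈ MRSet (ZMod 2) (inducedSub G W),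
        (augmentCol M (wtVec G W v)).rank = M.rank) ∧
    (3 ≤ Wᶜ.card → ∀ u v : V, u ∉ W → v ∉ W → u ≠ v →
      ∃ M ∈ MRSet (ZMod 2) (inducedSub G W),
        (borderMat M (wtVec G W u) (wtVec G W v)
          (if G.Adj u v then 1 else 0)).rank = M.rank) := by
  have exists_avoiding (s : Finset V) (hs : s.card < Wᶜ.card) : ∃ z ∉ W, ∀ v ∈ s, v ≠ z := by
    obtain ⟨z, hzW, hzs⟩ := Finset.exists_mem_notMem_of_card_lt_card hs
    exact ⟨z, Finset.mem_compl.1 hzW, fun v hv => ne_of_mem_of_not_mem hv hzs⟩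
  constructor
  · intro hcard v hv
    obtain ⟨z, hz, hne⟩ := exists_avoiding {v} hcard
    obtain ⟨M, hM, hvertex, -⟩ := exists_mem_MRSet_forall_rank_preserving hz (hdel z hz)
    exact ⟨M, hM, hvertex v hv (hne v (by simp))⟩
  · intro hcard u v hu hv huv
    obtain ⟨z, hz, hne⟩ := exists_avoiding {u, v} (Finset.card_le_two.trans_lt hcard)
    obtain ⟨M, hM, -, hedge⟩ := exists_mem_MRSet_forall_rank_preserving hz (hdel z hz)
    exact ⟨M, hM, hedge u v hu hv (hne u (by simp)) (hne v (by simp)) huv⟩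

/-- Let `H = G[W]` be an induced subgraph of `G` with `mr(F₂, H) = k`, and suppose
`G ∈ F_{k+1}(F₂, H)` (witnessed by this copy of `H`).  If `|V(G)| - |V(H)| ≥ 2`, then
every vertex of `G - H` is rank-preserving with respect to some `M ∈ MR(F₂, H)`; if
`|V(G)| - |V(H)| ≥ 3`, then every edge (pair of distinct vertices) of `G - H` is
rank-preserving with respect to some `M ∈ MR(F₂, H)`. -/
theorem exists_rank_preserving {V : Type*} [Fintype V] [DecidableEq V]
    (G : SimpleGraph V) [DecidableRel G.Adj] (W : Finset V) (k : ℕ)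
    (hH : minRank (ZMod 2) (inducedSub G W) = k)
    (hG : k + 1 ≤ minRank (ZMod 2) G)
    (hdel : ∀ v : V, v ∉ W → minRank (ZMod 2) (deleteVert G v) ≤ k) :
    (2 ≤ Wᶜ.card → ∀ v : V, v ∉ W →
      ∃ M ∈ MRSet (ZMod 2) (inducedSub G W),
        (augmentCol M (wtVec G W v)).rank = M.rank) ∧
    (3 ≤ Wᶜ.card → ∀ u v : V, u ∉ W → v ∉ W → u ≠ v →
      ∃ M ∈ MRSet (ZMod 2) (inducedSub G W),
        (borderMat M (wtVec G W u) (wtVec G W v)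
          (if G.Adj u v then 1 else 0)).rank = M.rank) := by
  subst hH
  exact exists_rank_preserving_general G W hdel
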